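/- Let G be a finite simple graph with n ≥ 1 vertices and let d_G = (1/n)·∑_{v} deg(v) be its average degree. Then G contains an independent set of size at least n/(1 + d_G). -/

import Mathlib

/-- A finset of vertices is an independent set of the simple graph `G` if no two
distinct elements of it are adjacent. -/
def SimpleGraph.IsIndepFinset {V : Type*} (G : SimpleGraph V) (I : Finset V) : Prop :=
  ∀ x ∈ I, ∀ y ∈ I, x ≠ y → ¬ G.Adj x y

theorem caro_wei_aux {V : Type*} [Fintype V] [DecidableEq V] (G : SimpleGraph V)
    [DecidableRel G.Adj] (S : Finset V) :
    ∃ I ⊆ S, G.IsIndepFinset I ∧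
      ∑ v ∈ S, (1 : ℝ) / (1 + ((S.filter (G.Adj v)).card : ℝ)) ≤ I.card := by
  induction S using Finset.strongInduction with
  | H S ih =>
    rcases S.eq_empty_or_nonempty with rfl | hS
    · exact ⟨∅, by simp, by simp [SimpleGraph.IsIndepFinset], by simp⟩
    obtain ⟨v, hv, hmin⟩ := S.exists_min_image (fun v => (S.filter (G.Adj v)).card) hS
    set N := insert v (S.filter (G.Adj v)) with hN
    have hNS : N ⊆ S := by
      intro x hx
      simp only [hN, Finset.mem_insert, Finset.mem_filter] at hx
      rcases hx with rfl | hx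
      · exact hv
      · exact hx.1
    have hvN : v ∈ N := by simp [hN]
    have hNc : N.card = (S.filter (G.Adj v)).card + 1 := by
      rw [hN, Finset.card_insert_of_notMem (by simp)]
    obtain ⟨I, hIS, hI, hsum⟩ := ih (S \ N) (Finset.sdiff_ssubset hNS ⟨v, hvN⟩)
    have hvI : v ∉ I := fun h => (Finset.mem_sdiff.1 (hIS h)).2 hvN
    have hadj : ∀ y ∈ I, ¬ G.Adj v y := by
      intro y hy h
      have := Finset.mem_sdiff.1 (hIS hy)
      exact this.2 (by simp [hN, this.1, h])
    refine ⟨insert v I, ?_, ?_, ?_⟩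
    · exact Finset.insert_subset hv (hIS.trans Finset.sdiff_subset)
    · intro x hx y hy hxy
      rw [Finset.mem_insert] at hx hy
      rcases hx with rfl | hx <;> rcases hy with rfl | hy
      · exact absurd rfl hxy
      · exact hadj y hy
      · exact fun h => hadj x hx h.symm
      · exact hI x hx y hy hxy
    · rw [Finset.card_insert_of_notMem hvI, ← Finset.sum_sdiff hNS]
      push_cast
      refine add_le_add (le_trans (Finset.sum_le_sum fun x _ => ?_) hsum) ?_
      · apply one_div_le_one_div_of_le (by positivity)
        have : ((S \ N).filter (G.Adj x)).card ≤ (S.filter (G.Adj x)).card :=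
          Finset.card_le_card (Finset.filter_subset_filter _ Finset.sdiff_subset)
        have : (((S \ N).filter (G.Adj x)).card : ℝ) ≤ (S.filter (G.Adj x)).card := by
          exact_mod_cast this
        linarith
      · have h1 : ∑ x ∈ N, (1 : ℝ) / (1 + ((S.filter (G.Adj x)).card : ℝ)) ≤
            ∑ x ∈ N, (1 : ℝ) / (N.card : ℝ) := by
          refine Finset.sum_le_sum fun x hx => ?_
          apply one_div_le_one_div_of_le
          · rw [hNc]; positivity
          · have h2 := hmin x (hNS hx)
            have h3 : N.card ≤ 1 + (S.filter (G.Adj x)).card := by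
              rw [hNc]; omega
            exact_mod_cast h3
        refine h1.trans ?_
        rw [Finset.sum_const, nsmul_eq_mul]
        exact le_of_eq (mul_one_div_cancel (by rw [hNc]; positivity))

/-- **Turán's theorem (independent set version)**: a finite simple graph on `n ≥ 1`
vertices with average degree `d_G` contains an independent set of size at least
`n / (1 + d_G)`. -/
theorem turan_indep {V : Type*} [Fintype V] [DecidableEq V] (G : SimpleGraph V)
    [DecidableRel G.Adj] (n : ℕ) (hn : n = Fintype.card V) (hn1 : 1 ≤ n)
    (d : ℝ) (hd : d = (∑ v : V, (G.degree v : ℝ)) / n) :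
    ∃ I : Finset V, G.IsIndepFinset I ∧ (n : ℝ) / (1 + d) ≤ I.card := by
  obtain ⟨I, -, hI, hs⟩ := caro_wei_aux G Finset.univ
  refine ⟨I, hI, le_trans ?_ hs⟩
  have hdeg : ∀ v, (Finset.univ.filter (G.Adj v)).card = G.degree v := by
    intro v
    rw [← SimpleGraph.card_neighborFinset_eq_degree, SimpleGraph.neighborFinset_eq_filter]
  simp only [hdeg]
  have h := Finset.sq_sum_div_le_sum_sq_div (Finset.univ : Finset V) (fun _ => (1 : ℝ))
    (g := fun v => 1 + (G.degree v : ℝ)) (fun v _ => by positivity)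
  simp only [one_pow] at h
  refine le_trans (le_of_eq ?_) h
  have hn0 : (0 : ℝ) < n := by exact_mod_cast hn1
  have h0 : (0 : ℝ) ≤ ∑ v : V, (G.degree v : ℝ) := Finset.sum_nonneg fun _ _ => by positivity
  rw [Finset.sum_add_distrib]
  simp only [Finset.sum_const, Finset.card_univ, ← hn, nsmul_eq_mul, mul_one]
  rw [hd]
  have h4 : (n : ℝ) + ∑ v : V, (G.degree v : ℝ) ≠ 0 := by positivity
  field_simp
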